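/- There exists an integer N such that for all integers n ≥ N and all p ∈ [1/3, 2/3], if Z follows the binomial distribution B(n, p), then both Pr[Z ≥ np + √n/10] ≥ 1/3 and Pr[Z ≤ np] ≥ 1/3. -/

import Mathlib

open scoped Classical

open MeasureTheory ProbabilityTheory Filter Topology Complex
open scoped NNReal

/-!
For bounded centred summands of variance `v`, the `n`-th power of the characteristic function is
close to `exp (-(n * v * t ^ 2 / 2))`, since both are `n`-th powers of numbers of modulus at most
one with the same second-order expansion. For the standardized binomial law the error is controlled
by `t` and `t / √(n * p * (1 - p))` alone, so by Lévy's continuity theorem the law is asymptotically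
Gaussian along every countably generated filter on the pairs `(n, p)` for which `n * p * (1 - p)`
tends to infinity. The filter `n → ∞` with no restriction on `p` beyond `2 / 9 ≤ p * (1 - p)`
makes the limit theorem uniform in `p`.

On that range `√n / 10` is at most a quarter of a standard deviation. As the standard Gaussian
density is at most `1 / 2`, the Gaussian mass beyond `1 / 4` is at least
`1 / 2 - 1 / 8 = 3 / 8 > 1 / 3`.
-/

section CharFun

lemma norm_pow_sub_pow_le {R : Type*} [SeminormedRing R] [NormOneClass R] {a b : R}
    (ha : ‖a‖ ≤ 1) (hb : ‖b‖ ≤ 1) (n : ℕ) : ‖a ^ n - b ^ n‖ ≤ n * ‖a - b‖ := by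
  induction n with
  | zero => simp
  | succ n ih =>
    have hbn : ‖b ^ n‖ ≤ 1 := (norm_pow_le b n).trans (pow_le_one₀ (norm_nonneg b) hb)
    calc ‖a ^ (n + 1) - b ^ (n + 1)‖ = ‖a * (a ^ n - b ^ n) + (a - b) * b ^ n‖ := by
          rw [pow_succ', pow_succ', mul_sub, sub_mul, sub_add_sub_cancel]
      _ ≤ ‖a‖ * ‖a ^ n - b ^ n‖ + ‖a - b‖ * ‖b ^ n‖ :=
          (norm_add_le _ _).trans (add_le_add (norm_mul_le _ _) (norm_mul_le _ _))
      _ ≤ 1 * (n * ‖a - b‖) + ‖a - b‖ * 1 := by gcongr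
      _ = (n + 1 : ℕ) * ‖a - b‖ := by
          push_cast
          ring

lemma norm_exp_mul_I_sub_le (x : ℝ) :
    ‖exp (x * I) - (1 + x * I - x ^ 2 / 2)‖ ≤ |x| ^ 3 * Real.exp |x| := by
  have htaylor : ∑ m ∈ Finset.range 3, (x * I) ^ m / (m.factorial : ℂ) =
      1 + x * I - x ^ 2 / 2 := by
    simp only [Finset.sum_range_succ, Finset.sum_range_zero, Nat.factorial, mul_pow, I_sq]
    push_cast
    ring
  simpa [htaylor] using norm_exp_sub_sum_le_norm_mul_exp (x * I) 3

-- `x` and `x ^ 2` are kept as factors so that the expansion integrates term by term.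
lemma norm_exp_mul_I_sub_le_of_abs_le {x b : ℝ} (hx : |x| ≤ b) (t : ℝ) :
    ‖exp (t * x * I) - (1 + x * (t * I) - ((x ^ 2 : ℝ) : ℂ) * (t ^ 2 / 2))‖ ≤
      x ^ 2 * (t ^ 2 * (b * |t| * Real.exp (b * |t|))) := by
  have htx : |t * x| ≤ b * |t| := by
    rw [abs_mul, mul_comm]
    gcongr
  have hbt : 0 ≤ b * |t| := (abs_nonneg _).trans htx
  calc ‖exp (t * x * I) - (1 + x * (t * I : ℂ) - ((x ^ 2 : ℝ) : ℂ) * (t ^ 2 / 2))‖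
      = ‖exp ((t * x : ℝ) * I) - (1 + (t * x : ℝ) * I - ((t * x : ℝ) : ℂ) ^ 2 / 2)‖ := by
        push_cast
        ring_nf
    _ ≤ |t * x| ^ 3 * Real.exp |t * x| := norm_exp_mul_I_sub_le (t * x)
    _ = (t * x) ^ 2 * (|t * x| * Real.exp |t * x|) := by
      rw [← sq_abs (t * x)]
      ring
    _ ≤ (t * x) ^ 2 * (b * |t| * Real.exp (b * |t|)) := by gcongr
    _ = x ^ 2 * (t ^ 2 * (b * |t| * Real.exp (b * |t|))) := by ring

lemma norm_exp_neg_sub_one_sub_le {y : ℝ} (hy : 0 ≤ y) :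
    ‖exp (-y) - (1 - y)‖ ≤ y ^ 2 * Real.exp y := by
  simpa [Finset.sum_range_succ, abs_of_nonneg hy, sub_eq_add_neg] using
    norm_exp_sub_sum_le_norm_mul_exp (-y) 2

variable {μ : Measure ℝ} [IsProbabilityMeasure μ] {b v : ℝ}

lemma norm_charFun_sub_le (hb : ∀ᵐ x ∂μ, |x| ≤ b) (hmean : ∫ x, x ∂μ = 0)
    (hvar : ∫ x, x ^ 2 ∂μ = v) (t : ℝ) :
    ‖charFun μ t - (1 - v * t ^ 2 / 2)‖ ≤ v * t ^ 2 * (b * |t| * Real.exp (b * |t|)) := by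
  have hint : Integrable (fun x : ℝ ↦ x) μ := .of_bound (by fun_prop) b hb
  have hint_sq : Integrable (fun x : ℝ ↦ x ^ 2) μ := by
    refine .of_bound (by fun_prop) (b ^ 2) (hb.mono fun x hx ↦ ?_)
    rw [norm_pow]
    exact pow_le_pow_left₀ (norm_nonneg x) hx 2
  have hint_exp : Integrable (fun x : ℝ ↦ exp (t * x * I)) μ :=
    .of_bound (by fun_prop) 1 (.of_forall fun x ↦ by
      exact_mod_cast (norm_exp_ofReal_mul_I (t * x)).le)
  have hint_lin : Integrable (fun x : ℝ ↦ 1 + x * (t * I : ℂ)) μ :=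
    (integrable_const 1).add (hint.ofReal.mul_const _)
  have hint_quad : Integrable (fun x : ℝ ↦ ((x ^ 2 : ℝ) : ℂ) * (t ^ 2 / 2)) μ :=
    hint_sq.ofReal.mul_const _
  have hint_taylor : Integrable
      (fun x : ℝ ↦ 1 + x * (t * I : ℂ) - ((x ^ 2 : ℝ) : ℂ) * (t ^ 2 / 2)) μ :=
    hint_lin.sub hint_quad
  have htaylor : ∫ x : ℝ, (1 + x * (t * I : ℂ) - ((x ^ 2 : ℝ) : ℂ) * (t ^ 2 / 2)) ∂μ =
      (1 - (v : ℂ) * t ^ 2 / 2 : ℂ) := by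
    rw [integral_sub hint_lin hint_quad,
      integral_add (integrable_const 1) (hint.ofReal.mul_const _), integral_mul_const,
      integral_mul_const, integral_complex_ofReal, integral_complex_ofReal, hmean,
      hvar]
    simp [mul_div_assoc]
  rw [charFun_apply_real, ← htaylor, ← integral_sub hint_exp hint_taylor, mul_assoc,
    ← hvar, ← integral_mul_const]
  exact norm_integral_le_of_norm_le (hint_sq.mul_const _)
    (hb.mono fun x hx ↦ norm_exp_mul_I_sub_le_of_abs_le hx t)

lemma norm_charFun_pow_sub_le (hb : ∀ᵐ x ∂μ, |x| ≤ b) (hmean : ∫ x, x ∂μ = 0)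
    (hvar : ∫ x, x ^ 2 ∂μ = v) (n : ℕ) (t : ℝ) :
    ‖charFun μ t ^ n - Real.exp (-(n * v * t ^ 2 / 2))‖ ≤ n * v * t ^ 2 *
      (b * |t| * Real.exp (b * |t|) + v * t ^ 2 / 4 * Real.exp (v * t ^ 2 / 2)) := by
  have hv : 0 ≤ v := hvar ▸ integral_nonneg fun x ↦ sq_nonneg x
  set y : ℝ := v * t ^ 2 / 2 with hy
  have hy0 : 0 ≤ y := by positivity
  have hexp : (Real.exp (-(n * v * t ^ 2 / 2)) : ℂ) = exp (-y) ^ n := by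
    rw [← exp_nat_mul, hy]
    push_cast
    ring_nf
  have hexp_le : ‖exp (-y : ℂ)‖ ≤ 1 := by
    simpa [norm_exp] using hy0
  have hcharFun : ‖charFun μ t - (1 - y)‖ ≤ v * t ^ 2 * (b * |t| * Real.exp (b * |t|)) := by
    simpa [hy] using norm_charFun_sub_le hb hmean hvar t
  calc ‖charFun μ t ^ n - Real.exp (-(n * v * t ^ 2 / 2))‖
      ≤ n * ‖charFun μ t - exp (-y)‖ := by
        rw [hexp]
        exact norm_pow_sub_pow_le (norm_charFun_le_one t) hexp_le n
    _ ≤ n * (‖charFun μ t - (1 - y)‖ + ‖exp (-y) - (1 - y)‖) := by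
        gcongr
        rw [norm_sub_rev (exp _)]
        exact norm_sub_le_norm_sub_add_norm_sub _ _ _
    _ ≤ n * (v * t ^ 2 * (b * |t| * Real.exp (b * |t|)) + y ^ 2 * Real.exp y) := by
        gcongr
        exact norm_exp_neg_sub_one_sub_le hy0
    _ = n * v * t ^ 2 * (b * |t| * Real.exp (b * |t|) + v * t ^ 2 / 4 * Real.exp y) := by
        rw [hy]
        ring

end CharFun

section Gaussian

variable {μ : ℝ} {v : ℝ≥0}

lemma measureReal_gaussianReal_Ici_mean (hv : v ≠ 0) :
    (gaussianReal μ v).real (Set.Ici μ) = 1 / 2 := by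
  have := nullSingletonClass_gaussianReal (μ := μ) hv
  have hsymm : (gaussianReal μ v).real (Set.Ici μ) = (gaussianReal μ v).real (Set.Iic μ) := by
    have hmap : (gaussianReal μ v).map (2 * μ - ·) = gaussianReal μ v := by
      rw [gaussianReal_map_const_sub]
      ring_nf
    conv_lhs => rw [← hmap]
    rw [map_measureReal_apply (by fun_prop) measurableSet_Ici]
    congr 1
    ext x
    simp only [Set.mem_preimage, Set.mem_Ici, Set.mem_Iic]
    constructor <;> intro <;> linarith
  have hcompl := probReal_compl_eq_one_sub (μ := gaussianReal μ v) (measurableSet_Iio (a := μ))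
  rw [Set.compl_Iio, measureReal_congr Iio_ae_eq_Iic, ← hsymm] at hcompl
  linarith

lemma measureReal_gaussianReal_Iic_mean (hv : v ≠ 0) :
    (gaussianReal μ v).real (Set.Iic μ) = 1 / 2 := by
  have := nullSingletonClass_gaussianReal (μ := μ) hv
  have hcompl := probReal_compl_eq_one_sub (μ := gaussianReal μ v) (measurableSet_Ici (a := μ))
  rw [Set.compl_Ici, measureReal_congr Iio_ae_eq_Iic, measureReal_gaussianReal_Ici_mean hv]
    at hcompl
  linarith

lemma gaussianReal_le_mul_volume (hv : v ≠ 0) (s : Set ℝ) :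
    gaussianReal μ v s ≤ ENNReal.ofReal (√(2 * Real.pi * v))⁻¹ * volume s := by
  rw [gaussianReal_apply μ hv, ← setLIntegral_const]
  refine lintegral_mono fun x ↦ ENNReal.ofReal_le_ofReal ?_
  rw [gaussianPDFReal]
  refine mul_le_of_le_one_right (by positivity) (Real.exp_le_one_iff.mpr ?_)
  exact div_nonpos_of_nonpos_of_nonneg (neg_nonpos.mpr (sq_nonneg _)) (by positivity)

lemma half_sub_le_measureReal_gaussianReal_Ici (hv : v ≠ 0) {x : ℝ} (hx : μ ≤ x) :
    1 / 2 - (x - μ) / √(2 * Real.pi * v) ≤ (gaussianReal μ v).real (Set.Ici x) := by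
  have hIco : (gaussianReal μ v).real (Set.Ico μ x) ≤ (x - μ) / √(2 * Real.pi * v) := by
    refine ENNReal.toReal_le_of_le_ofReal (by have := sub_nonneg.mpr hx; positivity) ?_
    refine (gaussianReal_le_mul_volume hv _).trans_eq ?_
    rw [Real.volume_Ico, ← ENNReal.ofReal_mul (by positivity), inv_mul_eq_div]
  have hunion := measureReal_union_le (μ := gaussianReal μ v) (Set.Ico μ x) (Set.Ici x)
  rw [Set.Ico_union_Ici_eq_Ici hx, measureReal_gaussianReal_Ici_mean hv] at hunion
  linarith

end Gaussian

section Binomial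

open scoped unitInterval

/-- The law of `Z - np` for `Z ~ B(n, p)`. -/
noncomputable def centeredBinomial (n : ℕ) (p : I) : Measure ℝ :=
  (binomial n p).map fun k : ℕ ↦ (k : ℝ) - n * p

instance isProbabilityMeasure_centeredBinomial (n : ℕ) (p : I) :
    IsProbabilityMeasure (centeredBinomial n p) :=
  Measure.isProbabilityMeasure_map .of_discrete

/-- The standard deviation `√(np(1 - p))` of the binomial distribution `B(n, p)`. -/
noncomputable def binomialStdDev (n : ℕ) (p : I) : ℝ :=
  √(n * (p * (1 - p)))

/-- The law of `(Z - np) / √(np(1 - p))` for `Z ~ B(n, p)`. -/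
noncomputable def standardizedBinomial (n : ℕ) (p : I) : Measure ℝ :=
  (centeredBinomial n p).map ((binomialStdDev n p)⁻¹ * ·)

instance isProbabilityMeasure_standardizedBinomial (n : ℕ) (p : I) :
    IsProbabilityMeasure (standardizedBinomial n p) :=
  Measure.isProbabilityMeasure_map (by fun_prop)

lemma measureReal_binomial (n : ℕ) (p : I) (s : Set ℕ) :
    (binomial n p).real s = ∑ k ∈ Finset.range (n + 1),
      if k ∈ s then (n.choose k : ℝ) * p ^ k * (1 - p) ^ (n - k) else 0 := by
  rw [← integral_indicator_one (MeasurableSet.of_discrete (s := s)), integral_binomial,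
    ← Nat.range_succ_eq_Iic]
  refine Finset.sum_congr rfl fun k _ ↦ ?_
  by_cases hk : k ∈ s <;> simp [hk]

lemma measureReal_standardizedBinomial (n : ℕ) (p : I) {s : Set ℝ} (hs : MeasurableSet s) :
    (standardizedBinomial n p).real s =
      (binomial n p).real {k : ℕ | ((k : ℝ) - n * p) / binomialStdDev n p ∈ s} := by
  rw [standardizedBinomial, map_measureReal_apply (by fun_prop) hs, centeredBinomial,
    map_measureReal_apply .of_discrete (hs.preimage (by fun_prop))]
  simp only [Set.preimage, inv_mul_eq_div, Set.mem_ofPred_eq]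

lemma charFun_centeredBinomial (n : ℕ) (p : I) (t : ℝ) :
    charFun (centeredBinomial n p) t =
      (p * exp ((1 - p) * t * Complex.I) + (1 - p) * exp (-p * t * Complex.I)) ^ n := by
  rw [charFun_apply_real, centeredBinomial, integral_map .of_discrete (by fun_prop),
    integral_binomial, add_pow, ← Nat.range_succ_eq_Iic]
  refine Finset.sum_congr rfl fun k hk ↦ ?_
  have hkn : k ≤ n := Nat.lt_succ_iff.mp (Finset.mem_range.mp hk)
  have hexp : exp (t * ((k : ℝ) - n * p : ℝ) * Complex.I) =
      exp (k * ((1 - p) * t * Complex.I)) * exp ((n - k : ℕ) * (-p * t * Complex.I)) := by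
    rw [← exp_add]
    congr 1
    push_cast [Nat.cast_sub hkn]
    ring
  rw [mul_pow, mul_pow, ← exp_nat_mul, ← exp_nat_mul, hexp, real_smul]
  push_cast
  ring

lemma charFun_centeredBinomial_eq_pow (n : ℕ) (p : I) (t : ℝ) :
    charFun (centeredBinomial n p) t = charFun (centeredBinomial 1 p) t ^ n := by
  rw [charFun_centeredBinomial, charFun_centeredBinomial, pow_one]

lemma integral_centeredBinomial_one (p : I) {f : ℝ → ℝ} (hf : Continuous f) :
    ∫ x, f x ∂centeredBinomial 1 p = p * f (1 - p) + (1 - p) * f (-p) := by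
  rw [centeredBinomial, integral_map .of_discrete hf.aestronglyMeasurable, integral_binomial,
    ← Nat.range_succ_eq_Iic]
  simp [Finset.sum_range_succ, add_comm]

lemma ae_abs_le_one_centeredBinomial_one (p : I) : ∀ᵐ x ∂centeredBinomial 1 p, |x| ≤ 1 := by
  rw [centeredBinomial, ae_map_iff .of_discrete (measurableSet_le (by fun_prop) (by fun_prop))]
  filter_upwards [ae_le_of_hasLaw_binomial HasLaw.id] with k hk
  have hk1 : (k : ℝ) ≤ 1 := by exact_mod_cast hk
  rw [Nat.cast_one, one_mul, abs_le]
  constructor <;> linarith [p.2.1, p.2.2, k.cast_nonneg (α := ℝ)]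

lemma norm_charFun_standardizedBinomial_sub_le {n : ℕ} {p : I} (h : 0 < binomialStdDev n p)
    (t : ℝ) :
    ‖charFun (standardizedBinomial n p) t - Real.exp (-(t ^ 2 / 2))‖ ≤
      t ^ 2 * (|t / binomialStdDev n p| * Real.exp |t / binomialStdDev n p| +
        (t / binomialStdDev n p) ^ 2 / 4 * Real.exp ((t / binomialStdDev n p) ^ 2 / 2)) := by
  set d := binomialStdDev n p
  have hp0 : 0 ≤ (p : ℝ) := p.2.1
  have hp1 : 0 ≤ 1 - (p : ℝ) := sub_nonneg.mpr p.2.2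
  have hd : (n : ℝ) * (p * (1 - p)) * (t / d) ^ 2 = t ^ 2 := by
    rw [show (n : ℝ) * (p * (1 - p)) = d ^ 2 from (Real.sq_sqrt (by positivity)).symm, ← mul_pow,
      mul_div_cancel₀ t h.ne']
  have hvar_le : p * (1 - p) * (t / d) ^ 2 ≤ (t / d) ^ 2 :=
    mul_le_of_le_one_left (sq_nonneg _) (by nlinarith)
  have hmean : ∫ x, x ∂centeredBinomial 1 p = 0 := by
    rw [integral_centeredBinomial_one p continuous_id']
    ring
  have hvar : ∫ x, x ^ 2 ∂centeredBinomial 1 p = p * (1 - p) := by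
    rw [integral_centeredBinomial_one p (continuous_pow 2)]
    ring
  have hbound := norm_charFun_pow_sub_le (ae_abs_le_one_centeredBinomial_one p) hmean hvar n (t / d)
  rw [← charFun_centeredBinomial_eq_pow, hd] at hbound
  rw [standardizedBinomial, charFun_map_mul, inv_mul_eq_div]
  refine hbound.trans ?_
  rw [one_mul]
  gcongr

variable {ι : Type*} {l : Filter ι} {n : ι → ℕ} {p : ι → I}

lemma tendsto_charFun_standardizedBinomial
    (h : Tendsto (fun i ↦ binomialStdDev (n i) (p i)) l atTop) (t : ℝ) :
    Tendsto (fun i ↦ charFun (standardizedBinomial (n i) (p i)) t) l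
      (𝓝 (charFun (gaussianReal 0 1) t)) := by
  have hcont : Continuous fun c : ℝ ↦
      t ^ 2 * (|c| * Real.exp |c| + c ^ 2 / 4 * Real.exp (c ^ 2 / 2)) := by fun_prop
  have hlim := (hcont.tendsto' 0 0 (by simp)).comp (h.const_div_atTop t)
  rw [charFun_gaussianReal, tendsto_iff_norm_sub_tendsto_zero]
  refine squeeze_zero' (.of_forall fun _ ↦ norm_nonneg _) ?_ hlim
  filter_upwards [h.eventually_gt_atTop 0] with i hi
  simpa using norm_charFun_standardizedBinomial_sub_le hi t

variable [l.IsCountablyGenerated]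

theorem tendsto_standardizedBinomial
    (h : Tendsto (fun i ↦ binomialStdDev (n i) (p i)) l atTop) :
    Tendsto (β := ProbabilityMeasure ℝ)
      (fun i ↦ ⟨standardizedBinomial (n i) (p i), inferInstance⟩) l
      (𝓝 ⟨gaussianReal 0 1, inferInstance⟩) :=
  tendsto_of_seq_tendsto fun _ hu ↦ ProbabilityMeasure.tendsto_of_tendsto_charFun fun t ↦
    (tendsto_charFun_standardizedBinomial h t).comp hu

lemma tendsto_measureReal_standardizedBinomial
    (h : Tendsto (fun i ↦ binomialStdDev (n i) (p i)) l atTop) {s : Set ℝ}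
    (hs : gaussianReal 0 1 (frontier s) = 0) :
    Tendsto (fun i ↦ (standardizedBinomial (n i) (p i)).real s) l
      (𝓝 ((gaussianReal 0 1).real s)) :=
  (ENNReal.tendsto_toReal (measure_ne_top _ _)).comp
    (ProbabilityMeasure.tendsto_measure_of_null_frontier_of_tendsto'
      (tendsto_standardizedBinomial h) hs)

theorem tendsto_measureReal_binomial_ge
    (h : Tendsto (fun i ↦ binomialStdDev (n i) (p i)) l atTop) (x : ℝ) :
    Tendsto (fun i ↦ (binomial (n i) (p i)).real
        {k | (n i : ℝ) * p i + x * binomialStdDev (n i) (p i) ≤ k}) l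
      (𝓝 ((gaussianReal 0 1).real (Set.Ici x))) := by
  have := nullSingletonClass_gaussianReal (μ := 0) one_ne_zero
  refine (tendsto_measureReal_standardizedBinomial h (s := Set.Ici x) (by simp)).congr' ?_
  filter_upwards [h.eventually_gt_atTop 0] with i hi
  simp only [measureReal_standardizedBinomial _ _ measurableSet_Ici, Set.mem_Ici, le_div_iff₀ hi,
    le_sub_iff_add_le']

theorem tendsto_measureReal_binomial_le
    (h : Tendsto (fun i ↦ binomialStdDev (n i) (p i)) l atTop) (x : ℝ) :
    Tendsto (fun i ↦ (binomial (n i) (p i)).real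
        {k | (k : ℝ) ≤ n i * p i + x * binomialStdDev (n i) (p i)}) l
      (𝓝 ((gaussianReal 0 1).real (Set.Iic x))) := by
  have := nullSingletonClass_gaussianReal (μ := 0) one_ne_zero
  refine (tendsto_measureReal_standardizedBinomial h (s := Set.Iic x) (by simp)).congr' ?_
  filter_upwards [h.eventually_gt_atTop 0] with i hi
  simp only [measureReal_standardizedBinomial _ _ measurableSet_Iic, Set.mem_Iic, div_le_iff₀ hi,
    sub_le_iff_le_add']

lemma sqrt_mul_sqrt_le_binomialStdDev {δ : ℝ} {n : ℕ} {p : I} (h : δ ≤ p * (1 - p)) :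
    √n * √δ ≤ binomialStdDev n p := by
  rw [← Real.sqrt_mul n.cast_nonneg]
  exact Real.sqrt_le_sqrt (mul_le_mul_of_nonneg_left h n.cast_nonneg)

lemma tendsto_binomialStdDev_atTop {δ : ℝ} (hδ : 0 < δ) :
    Tendsto (fun x : ℕ × I ↦ binomialStdDev x.1 x.2)
      (atTop ×ˢ 𝓟 {p : I | δ ≤ p * (1 - p)}) atTop := by
  have hlim : Tendsto (fun n : ℕ ↦ √n * √δ) atTop atTop :=
    (Real.tendsto_sqrt_atTop.comp tendsto_natCast_atTop_atTop).atTop_mul_const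
      (Real.sqrt_pos.mpr hδ)
  refine tendsto_atTop_mono' _ ?_ (hlim.comp tendsto_fst)
  filter_upwards [tendsto_snd.eventually (mem_principal_self _)] with x hx
  exact sqrt_mul_sqrt_le_binomialStdDev hx

end Binomial

lemma one_third_lt_measureReal_gaussianReal_Ici :
    1 / 3 < (gaussianReal 0 1).real (Set.Ici (1 / 4)) := by
  have hsqrt : 2 ≤ √(2 * Real.pi) :=
    Real.le_sqrt_of_sq_le (by linarith [Real.pi_gt_three])
  calc (1 / 3 : ℝ) < 1 / 2 - 1 / 4 / 2 := by norm_num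
    _ ≤ 1 / 2 - 1 / 4 / √(2 * Real.pi) := by gcongr
    _ ≤ (gaussianReal 0 1).real (Set.Ici (1 / 4)) := by
      simpa using half_sub_le_measureReal_gaussianReal_Ici (μ := 0) one_ne_zero
        (x := 1 / 4) (by norm_num)

theorem eventually_one_third_lt_measureReal_binomial :
    ∀ᶠ n : ℕ in atTop, ∀ p : unitInterval, 2 / 9 ≤ (p * (1 - p) : ℝ) →
      1 / 3 < (binomial n p).real {k | (n : ℝ) * p + √n / 10 ≤ k} ∧
      1 / 3 < (binomial n p).real {k | (k : ℝ) ≤ n * p} := by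
  have hσ := tendsto_binomialStdDev_atTop (δ := 2 / 9) (by norm_num)
  have hupper := (tendsto_measureReal_binomial_ge hσ (1 / 4)).eventually_const_lt
    one_third_lt_measureReal_gaussianReal_Ici
  have hlower := (tendsto_measureReal_binomial_le hσ 0).eventually_const_lt (u := 1 / 3)
    (by rw [measureReal_gaussianReal_Iic_mean one_ne_zero]; norm_num)
  filter_upwards [eventually_prod_principal_iff.mp (hupper.and hlower)] with n hn p hp
  have hsqrt : 2 / 5 ≤ √(2 / 9 : ℝ) := Real.le_sqrt_of_sq_le (by norm_num)
  have hdev : √n / 10 ≤ 1 / 4 * binomialStdDev n p := by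
    nlinarith [sqrt_mul_sqrt_le_binomialStdDev (n := n) hp, Real.sqrt_nonneg n]
  obtain ⟨hge, hle⟩ := hn p hp
  refine ⟨hge.trans_le (measureReal_mono fun k hk ↦ ?_), by simpa using hle⟩
  exact (add_le_add_right hdev _).trans hk

/-- **binomial anti-concentration.** There exists an integer `N` such that for
all integers `n ≥ N` and all `p ∈ [1/3, 2/3]`, if `Z ~ B(n, p)`, then both
`Pr[Z ≥ np + √n/10] ≥ 1/3` and `Pr[Z ≤ np] ≥ 1/3`. -/
theorem binomial_anticoncentration :
    ∃ N : ℕ, ∀ n : ℕ, N ≤ n → ∀ p : ℝ, p ∈ Set.Icc (1 / 3 : ℝ) (2 / 3) →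
      ((1 / 3 : ℝ) ≤ ∑ x ∈ Finset.range (n + 1),
          if (n : ℝ) * p + Real.sqrt n / 10 ≤ (x : ℝ)
          then (n.choose x : ℝ) * p ^ x * (1 - p) ^ (n - x) else 0) ∧
      ((1 / 3 : ℝ) ≤ ∑ x ∈ Finset.range (n + 1),
          if (x : ℝ) ≤ (n : ℝ) * p
          then (n.choose x : ℝ) * p ^ x * (1 - p) ^ (n - x) else 0) := by
  obtain ⟨N, hN⟩ := eventually_atTop.mp eventually_one_third_lt_measureReal_binomial
  refine ⟨N, fun n hn p ⟨hp₁, hp₂⟩ ↦ ?_⟩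
  have hvar : 2 / 9 ≤ p * (1 - p) := by nlinarith
  obtain ⟨hge, hle⟩ := hN n hn ⟨p, by linarith, by linarith⟩ hvar
  rw [measureReal_binomial] at hge hle
  exact ⟨hge.le, hle.le⟩
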